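/- For every odd n ≥ 3, W^(1)[g_n] ≥ 2/π. Consequently, the sequence g_n does not provide a counterexample to the conjecture that every linear threshold function f satisfies W^(0)[f] + W^(1)[f] ≥ 2/π. -/

import Mathlib

open Finset

namespace BKS

/-- sign function: 1 if z ≥ 0, -1 otherwise. -/
noncomputable def sgn (z : ℝ) : ℝ := if 0 ≤ z then 1 else -1

/-- encode Bool as the ±1 value of a bit. -/
def chi (b : Bool) : ℝ := if b then 1 else -1

/-- Fourier coefficient of f at S. -/
noncomputable def fourierCoeff {n : ℕ} (f : (Fin n → Bool) → ℝ) (S : Finset (Fin n)) : ℝ :=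
  (1 / 2 ^ n : ℝ) * ∑ x : Fin n → Bool, f x * ∏ i ∈ S, chi (x i)

/-- Fourier weight of f at level k: W^(k)[f]. -/
noncomputable def fourierWeight {n : ℕ} (k : ℕ) (f : (Fin n → Bool) → ℝ) : ℝ :=
  ∑ S ∈ Finset.univ.filter (fun S : Finset (Fin n) => S.card = k), (fourierCoeff f S) ^ 2

/-- Noise stability of f at ρ. -/
noncomputable def noiseStab {n : ℕ} (ρ : ℝ) (f : (Fin n → Bool) → ℝ) : ℝ :=
  ∑ k ∈ Finset.range (n + 1), ρ ^ k * fourierWeight k f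

/-- Majority function on n bits. -/
noncomputable def Maj (n : ℕ) : (Fin n → Bool) → ℝ := fun x => sgn (∑ i, chi (x i))

/-- The function g_n(x) = sgn(2(x_1 + ⋯ + x_{n-3}) + x_{n-2} + x_{n-1} + x_n). -/
noncomputable def gfun (n : ℕ) : (Fin n → Bool) → ℝ :=
  fun x => sgn (∑ i : Fin n, (if (i : ℕ) < n - 3 then (2 : ℝ) else 1) * chi (x i))

/-- f is a linear threshold function. -/
def IsLTF {n : ℕ} (f : (Fin n → Bool) → ℝ) : Prop :=
  ∃ (w0 : ℝ) (w : Fin n → ℝ), ∀ x, f x = sgn (w0 + ∑ i, w i * chi (x i))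

/-! The weights `w = (2, …, 2, 1, 1, 1)` defining `g = gfun n` satisfy
`∑ i, w i * ĝ({i}) = 𝔼 |w · x|`, because `sgn z * z = |z|`, so Cauchy–Schwarz gives
`(𝔼 |w · x|)² ≤ ‖w‖² W⁽¹⁾[g]`. For `n = 2k + 3` one has `‖w‖² = 8k + 3`, and
`𝔼 |w · x| = (8k + 3) / 2 * p` with `p = centralBinom k / 4 ^ k`: the first `2k` signs have an
even sum `S`, so averaging over the last three changes `|2S|` only when `S = 0`. The resulting
bound `W⁽¹⁾[g] ≥ p² (8k + 3) / 4` equals `(8k + 3) / (8k + 4)` divided by the `k`-th Wallis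
product, and decreases to `2 / π`. -/

section LevelOneWeight

variable {n : ℕ}

lemma fourierWeight_nonneg (k : ℕ) (f : (Fin n → Bool) → ℝ) : 0 ≤ fourierWeight k f :=
  sum_nonneg fun _ _ ↦ sq_nonneg _

lemma fourierWeight_one (f : (Fin n → Bool) → ℝ) :
    fourierWeight 1 f = ∑ i, fourierCoeff f {i} ^ 2 := by
  rw [fourierWeight, univ_filter_card_eq, powersetCard_one, sum_map]
  rfl

lemma sum_mul_fourierCoeff_singleton (w : Fin n → ℝ) (f : (Fin n → Bool) → ℝ) :
    ∑ i, w i * fourierCoeff f {i} = 1 / 2 ^ n * ∑ x, f x * ∑ i, w i * chi (x i) := by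
  simp only [fourierCoeff, prod_singleton, mul_sum]
  rw [sum_comm]
  exact sum_congr rfl fun x _ ↦ sum_congr rfl fun i _ ↦ by ring

lemma sq_sum_mul_fourierCoeff_singleton_le (w : Fin n → ℝ) (f : (Fin n → Bool) → ℝ) :
    (∑ i, w i * fourierCoeff f {i}) ^ 2 ≤ (∑ i, w i ^ 2) * fourierWeight 1 f := by
  rw [fourierWeight_one]
  exact sum_mul_sq_le_sq_mul_sq univ w _

lemma sgn_mul_self (z : ℝ) : sgn z * z = |z| := by
  unfold sgn
  split_ifs with hz
  · rw [one_mul, abs_of_nonneg hz]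
  · rw [neg_one_mul, abs_of_neg (not_le.mp hz)]

lemma sq_mean_abs_le_mul_fourierWeight_one_sgn (w : Fin n → ℝ) :
    (1 / 2 ^ n * ∑ x : Fin n → Bool, |∑ i, w i * chi (x i)|) ^ 2 ≤
      (∑ i, w i ^ 2) * fourierWeight 1 fun x ↦ sgn (∑ i, w i * chi (x i)) := by
  simpa only [sum_mul_fourierCoeff_singleton, sgn_mul_self] using
    sq_sum_mul_fourierCoeff_singleton_le w fun x ↦ sgn (∑ i, w i * chi (x i))

end LevelOneWeight

section BinomialSums

lemma sum_range_choose_mul_sub_two_mul (n r : ℕ) :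
    ∑ j ∈ range r, (n.choose j : ℝ) * (n - 2 * j) = r * n.choose r := by
  induction r with
  | zero => simp
  | succ r ih =>
    have hstep : (n.choose (r + 1) : ℝ) * (r + 1) = n.choose r * (n - r) := by
      rcases le_or_gt r n with hr | hr
      · rw [← Nat.cast_sub hr]
        exact_mod_cast n.choose_succ_right_eq r
      · simp [Nat.choose_eq_zero_of_lt hr, Nat.choose_eq_zero_of_lt (hr.trans r.lt_succ_self)]
    rw [sum_range_succ, ih]
    push_cast
    linear_combination -hstep

-- The signed sum over all `j` vanishes, so both halves of the absolute sum contribute equally.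
lemma sum_range_choose_mul_abs_two_mul_sub {n r : ℕ} (hn : n ≤ 2 * r) (hr : 2 * r ≤ n + 1) :
    ∑ j ∈ range (n + 1), (n.choose j : ℝ) * |2 * (j : ℝ) - n| = 2 * (r * n.choose r) := by
  have hrn : r ≤ n + 1 := by lia
  have hlow : ∑ j ∈ range r, (n.choose j : ℝ) * |2 * (j : ℝ) - n| =
      ∑ j ∈ range r, (n.choose j : ℝ) * (n - 2 * j) := by
    refine sum_congr rfl fun j hj ↦ ?_
    have hjn : (2 * j : ℝ) ≤ n := by
      have := mem_range.mp hj
      exact_mod_cast (by lia : 2 * j ≤ n)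
    rw [abs_of_nonpos (by linarith), neg_sub]
  have hhigh : ∑ j ∈ Ico r (n + 1), (n.choose j : ℝ) * |2 * (j : ℝ) - n| =
      -∑ j ∈ Ico r (n + 1), (n.choose j : ℝ) * (n - 2 * j) := by
    rw [← sum_neg_distrib]
    refine sum_congr rfl fun j hj ↦ ?_
    have hnj : (n : ℝ) ≤ 2 * j := by
      have := (mem_Ico.mp hj).1
      exact_mod_cast (by lia : n ≤ 2 * j)
    rw [abs_of_nonneg (by linarith), ← mul_neg, neg_sub]
  have htotal : ∑ j ∈ range (n + 1), (n.choose j : ℝ) * (n - 2 * j) = 0 := by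
    simp [sum_range_choose_mul_sub_two_mul]
  rw [← sum_range_add_sum_Ico _ hrn, sum_range_choose_mul_sub_two_mul] at htotal
  rw [← sum_range_add_sum_Ico _ hrn, hlow, hhigh, sum_range_choose_mul_sub_two_mul]
  linarith

end BinomialSums

section SignSums

lemma sum_chi_decide_mem {ι : Type*} [Fintype ι] [DecidableEq ι] (s : Finset ι) :
    ∑ i, chi (decide (i ∈ s)) = 2 * (#s : ℝ) - Fintype.card ι := by
  have hchi (i : ι) : chi (decide (i ∈ s)) = 2 * (if i ∈ s then 1 else 0) - 1 := by
    by_cases hi : i ∈ s <;> norm_num [chi, hi]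
  simp [hchi, mul_comm]

lemma sum_apply_sum_chi {ι M : Type*} [Fintype ι] [DecidableEq ι] [AddCommMonoid M] (F : ℝ → M) :
    ∑ x : ι → Bool, F (∑ i, chi (x i)) =
      ∑ j ∈ range (Fintype.card ι + 1),
        (Fintype.card ι).choose j • F (2 * (j : ℝ) - Fintype.card ι) := by
  calc ∑ x : ι → Bool, F (∑ i, chi (x i))
      = ∑ s : Finset ι, F (∑ i, chi (decide (i ∈ s))) :=
        sum_nbij' (fun x ↦ univ.filter (x · = true)) (fun s i ↦ decide (i ∈ s))
          (by simp) (by simp) (by simp) (by simp) (by simp)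
    _ = ∑ s ∈ univ.powerset, F (2 * (#s : ℝ) - Fintype.card ι) := by
        simp_rw [sum_chi_decide_mem, powerset_univ]
    _ = _ := sum_powerset_apply_card fun j ↦ F (2 * (j : ℝ) - Fintype.card ι)

lemma sum_abs_add_sum_chi_fin_three {t : ℝ} (ht : t = 0 ∨ 3 ≤ |t|) :
    ∑ y : Fin 3 → Bool, |t + ∑ i, chi (y i)| = 8 * |t| + if t = 0 then 12 else 0 := by
  have hexpand : ∑ y : Fin 3 → Bool, |t + ∑ i, chi (y i)| =
      |t - 3| + 3 * |t - 1| + 3 * |t + 1| + |t + 3| := by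
    rw [sum_apply_sum_chi fun s ↦ |t + s|]
    norm_num [sum_range_succ, Nat.choose, sub_eq_add_neg]
  rw [hexpand]
  rcases ht with rfl | ht
  · norm_num
  have ht0 : t ≠ 0 := abs_pos.mp (by linarith)
  rw [if_neg ht0]
  rcases le_abs'.mp ht with ht | ht
  · rw [abs_of_nonpos (by linarith), abs_of_nonpos (by linarith), abs_of_nonpos (by linarith),
      abs_of_nonpos (by linarith), abs_of_nonpos (by linarith)]
    ring
  · rw [abs_of_nonneg (by linarith), abs_of_nonneg (by linarith), abs_of_nonneg (by linarith),
      abs_of_nonneg (by linarith), abs_of_nonneg (by linarith)]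
    ring

lemma sum_abs_four_mul_intCast_add_sum_chi_fin_three (z : ℤ) :
    ∑ y : Fin 3 → Bool, |4 * (z : ℝ) + ∑ i, chi (y i)| =
      32 * |(z : ℝ)| + if z = 0 then 12 else 0 := by
  have hgap : 4 * (z : ℝ) = 0 ∨ 3 ≤ |4 * (z : ℝ)| := by
    rcases eq_or_ne z 0 with rfl | hz
    · simp
    · have hone : (1 : ℝ) ≤ |(z : ℝ)| := by exact_mod_cast Int.one_le_abs hz
      right
      rw [abs_mul, abs_of_pos four_pos]
      linarith
  rw [sum_abs_add_sum_chi_fin_three hgap, abs_mul, abs_of_pos four_pos, ← mul_assoc]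
  norm_num

lemma sum_abs_two_mul_sum_chi_add_sum_chi (k : ℕ) :
    ∑ x : Fin (2 * k) → Bool, ∑ y : Fin 3 → Bool, |2 * ∑ i, chi (x i) + ∑ i, chi (y i)| =
      4 * (8 * k + 3) * k.centralBinom := by
  have hinner (j : ℕ) : ∑ y : Fin 3 → Bool, |2 * (2 * (j : ℝ) - (2 * k : ℕ)) + ∑ i, chi (y i)| =
      16 * |2 * (j : ℝ) - (2 * k : ℕ)| + if j = k then 12 else 0 := by
    have hcast : 2 * (j : ℝ) - (2 * k : ℕ) = 2 * ((j - k : ℤ) : ℝ) := by push_cast; ring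
    rw [hcast, ← mul_assoc, abs_mul, abs_two, ← mul_assoc]
    norm_num only [sum_abs_four_mul_intCast_add_sum_chi_fin_three, sub_eq_zero, Nat.cast_inj]
  calc ∑ x : Fin (2 * k) → Bool, ∑ y : Fin 3 → Bool, |2 * ∑ i, chi (x i) + ∑ i, chi (y i)|
      = ∑ j ∈ range (2 * k + 1), ((2 * k).choose j : ℝ) *
          (16 * |2 * (j : ℝ) - (2 * k : ℕ)| + if j = k then 12 else 0) := by
        rw [sum_apply_sum_chi fun s ↦ ∑ y : Fin 3 → Bool, |2 * s + ∑ i, chi (y i)|]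
        simp only [Fintype.card_fin, nsmul_eq_mul, hinner]
    _ = 16 * ∑ j ∈ range (2 * k + 1), ((2 * k).choose j : ℝ) * |2 * (j : ℝ) - (2 * k : ℕ)| +
          k.centralBinom * 12 := by
        have hk : k ∈ range (2 * k + 1) := mem_range.mpr (by lia)
        simp only [mul_add, sum_add_distrib, mul_sum, mul_left_comm, mul_ite, mul_zero,
          sum_ite_eq', if_pos hk, Nat.centralBinom_eq_two_mul_choose]
    _ = 4 * (8 * k + 3) * k.centralBinom := by
        rw [sum_range_choose_mul_abs_two_mul_sub le_rfl (Nat.le_succ _),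
          ← Nat.centralBinom_eq_two_mul_choose]
        ring

end SignSums

section GfunWeight

/-- The weight vector `(2, …, 2, 1, 1, 1)` of the linear threshold function `gfun n`. -/
def gfunWeight (n : ℕ) (i : Fin n) : ℝ := if (i : ℕ) < n - 3 then 2 else 1

lemma gfunWeight_castAdd (m : ℕ) (i : Fin m) : gfunWeight (m + 3) (Fin.castAdd 3 i) = 2 := by
  simp [gfunWeight]

lemma gfunWeight_natAdd (m : ℕ) (i : Fin 3) : gfunWeight (m + 3) (Fin.natAdd m i) = 1 := by
  simp [gfunWeight]

lemma sum_sq_gfunWeight (m : ℕ) : ∑ i, gfunWeight (m + 3) i ^ 2 = 4 * m + 3 := by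
  norm_num [Fin.sum_univ_add, gfunWeight_castAdd, gfunWeight_natAdd, mul_comm]

lemma sum_gfunWeight_mul_chi_append {m : ℕ} (x : Fin m → Bool) (y : Fin 3 → Bool) :
    ∑ i, gfunWeight (m + 3) i * chi (Fin.append x y i) = 2 * ∑ i, chi (x i) + ∑ i, chi (y i) := by
  simp [Fin.sum_univ_add, gfunWeight_castAdd, gfunWeight_natAdd, mul_sum]

lemma sum_abs_sum_gfunWeight_mul_chi (k : ℕ) :
    ∑ x : Fin (2 * k + 3) → Bool, |∑ i, gfunWeight (2 * k + 3) i * chi (x i)| =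
      4 * (8 * k + 3) * k.centralBinom := by
  rw [← sum_abs_two_mul_sum_chi_add_sum_chi, ← (Fin.appendEquiv (2 * k) 3).sum_comp,
    Fintype.sum_prod_type]
  simp only [Fin.appendEquiv, Equiv.coe_fn_mk, sum_gfunWeight_mul_chi_append]

lemma sq_centralBinom_div_le_fourierWeight_one_gfun (k : ℕ) :
    (k.centralBinom / 4 ^ k : ℝ) ^ 2 * ((8 * k + 3) / 4) ≤
      fourierWeight 1 (gfun (2 * k + 3)) := by
  have hmean : (1 / 2 ^ (2 * k + 3) * (4 * (8 * k + 3) * k.centralBinom) : ℝ) =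
      (8 * k + 3) / 2 * (k.centralBinom / 4 ^ k) := by
    have hfour : (2 : ℝ) ^ 2 = 4 := by norm_num
    rw [pow_add, pow_mul, hfour]
    field
  have hnorm : ∑ i, gfunWeight (2 * k + 3) i ^ 2 = 8 * k + 3 := by
    rw [sum_sq_gfunWeight]
    push_cast
    ring
  have hcs : ((8 * k + 3) / 2 * (k.centralBinom / 4 ^ k) : ℝ) ^ 2 ≤
      (8 * k + 3) * fourierWeight 1 (gfun (2 * k + 3)) := by
    rw [← hmean, ← sum_abs_sum_gfunWeight_mul_chi, ← hnorm]
    exact sq_mean_abs_le_mul_fourierWeight_one_sgn (gfunWeight (2 * k + 3))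
  refine le_of_mul_le_mul_left (hcs.trans_eq' ?_) (by positivity : (0 : ℝ) < 8 * k + 3)
  ring

end GfunWeight

section Wallis

open Real Filter Topology

lemma sq_centralBinom_div_mul_eq_inv_wallis (k : ℕ) :
    (k.centralBinom / 4 ^ k : ℝ) ^ 2 * (2 * k + 1) = (Wallis.W k)⁻¹ := by
  have hpow : (2 : ℝ) ^ (4 * k) = (4 ^ k) ^ 2 := by
    rw [← pow_mul, mul_comm k 2, pow_mul, pow_mul]
    norm_num
  have hk : k ≤ 2 * k := by lia
  have hsub : 2 * k - k = k := by lia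
  rw [Wallis.W_eq_factorial_ratio, Nat.centralBinom_eq_two_mul_choose, Nat.cast_choose ℝ hk, hsub,
    hpow]
  field_simp

lemma monotone_wallis_mul : Monotone fun k : ℕ ↦ Wallis.W k * ((4 + 8 * k) / (3 + 8 * k)) := by
  refine monotone_nat_of_le_succ fun k ↦ ?_
  rw [Wallis.W_succ, mul_assoc]
  refine mul_le_mul_of_nonneg_left ?_ (Wallis.W_pos k).le
  rw [div_mul_div_comm, div_mul_div_comm, div_le_div_iff₀ (by positivity) (by positivity)]
  push_cast
  nlinarith [(k.cast_nonneg : (0 : ℝ) ≤ k)]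

lemma tendsto_wallis_mul :
    Tendsto (fun k : ℕ ↦ Wallis.W k * ((4 + 8 * k) / (3 + 8 * k))) atTop (𝓝 (π / 2)) := by
  simpa using Wallis.tendsto_W_nhds_pi_div_two.mul
    (tendsto_add_mul_div_add_mul_atTop_nhds (4 : ℝ) 3 8 (d := 8) (by norm_num))

lemma two_div_pi_le_sq_centralBinom_div (k : ℕ) :
    2 / π ≤ (k.centralBinom / 4 ^ k : ℝ) ^ 2 * ((8 * k + 3) / 4) := by
  have hle : Wallis.W k * ((4 + 8 * k) / (3 + 8 * k)) ≤ π / 2 :=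
    monotone_wallis_mul.ge_of_tendsto tendsto_wallis_mul k
  have hpos : 0 < Wallis.W k := Wallis.W_pos k
  calc 2 / π = (π / 2)⁻¹ := (inv_div π 2).symm
    _ ≤ (Wallis.W k * ((4 + 8 * k) / (3 + 8 * k)))⁻¹ := inv_anti₀ (by positivity) hle
    _ = (k.centralBinom / 4 ^ k : ℝ) ^ 2 * ((8 * k + 3) / 4) := by
        rw [mul_inv, ← sq_centralBinom_div_mul_eq_inv_wallis]
        field_simp
        ring

end Wallis

theorem stmt16 (n : ℕ) (hn : Odd n) (h3 : 3 ≤ n) :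
    2 / Real.pi ≤ fourierWeight 1 (gfun n) ∧
    2 / Real.pi ≤ fourierWeight 0 (gfun n) + fourierWeight 1 (gfun n) := by
  obtain ⟨k, rfl⟩ : ∃ k, n = 2 * k + 3 := by
    obtain ⟨j, rfl⟩ := hn
    exact ⟨j - 1, by lia⟩
  have hone : 2 / Real.pi ≤ fourierWeight 1 (gfun (2 * k + 3)) :=
    (two_div_pi_le_sq_centralBinom_div k).trans (sq_centralBinom_div_le_fourierWeight_one_gfun k)
  exact ⟨hone, le_add_of_nonneg_of_le (fourierWeight_nonneg 0 _) hone⟩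

end BKS
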